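/- Let a ∈ ℝ and let u be a bounded classical solution of (E) on ℝ × (0,∞) with u(x,t) → α·H(a−x) as t → 0⁺ locally uniformly on ℝ∖{a}. Then: (1) 0 ≤ u(x,t) ≤ ω(α,t) for all x ∈ ℝ, t > 0; (2) ∂_x u(x,t) < 0 for all x ∈ ℝ and t > 0; (3) for each t > 0, u(x,t) → 0 as x → +∞ and u(x,t) → ω(α,t) as x → −∞; (4) for any x₀ ∈ ℝ, the translate (x,t) ↦ u(x + x₀, t) is such a solution with parameter a − x₀ in place of a; (5) if a₁ < a₂ and u₁, u₂ are such solutions with parameters a₁ and a₂ respectively, then u₁(x,t) < u₂(x,t) for all x ∈ ℝ and t > 0. -/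

import Mathlib

/-!
Everything rests on one comparison principle on `ℝ × (0, t₀]`, the lemma `comparison`: a function
that is bounded above, satisfies `dₜ ≤ dₓₓ + L d` where it is positive, and is asymptotically
nonpositive as `t → 0⁺` away from two points, is nonpositive. Only boundedness is known at the two
exceptional points, where the initial data jump. They are absorbed by the heat flow of a large
multiple of the indicator function of a short interval, `heatBump`, which is explicit in terms of
the error function: it stays above a fixed constant on that interval for short times, but at fixed
positive times it is at most half the length of the interval divided by `√t`. The derivative tests
at a maximum of the difference with the barrier do the rest.

For two bounded solutions the nonlinearity is Lipschitz on the relevant compact set, so `comparison`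
applies to their difference, possibly minus a multiple of the heat solution `exp (t ± x)` times
`exp (L t)` (`sol_compare`). This gives the bounds `0 ≤ u ≤ ω(α, ·)`, the monotonicity in `a`, and
exponential bounds for `u` and `ω(α, ·) - u` at `x = ±∞`, hence the limits.

Strictness comes from a quantitative strong maximum principle (`exists_separation`): a gap `m` on an
interval at time `t₁` forces a gap `κ m` at every later point, `κ` being independent of the pair of
solutions and of `m`. Applied to solutions with parameters `a₁ < a₂`, whose initial data differ by
`α` between `a₁` and `a₂`, it gives `u₁ < u₂`. Applied to `u` and its translate by `η`, whose gap is
at least proportional to `η` near a point of negative slope, it bounds the difference quotients away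
from `0` as `η → 0⁺`, hence `∂ₓu < 0`.
-/

open Real Filter Topology Set

noncomputable section

/-- `u` is a classical solution of `u_t = u_xx + f(t,u)` on `ℝ × I`. -/
def IsSolOn (f : ℝ → ℝ → ℝ) (u : ℝ → ℝ → ℝ) (I : Set ℝ) : Prop :=
  ∃ ut ux uxx : ℝ → ℝ → ℝ,
    (∀ x : ℝ, ∀ t ∈ I, HasDerivAt (fun s => u x s) (ut x t) t) ∧
    (∀ x : ℝ, ∀ t ∈ I, HasDerivAt (fun y => u y t) (ux x t) x) ∧
    (∀ x : ℝ, ∀ t ∈ I, HasDerivAt (fun y => ux y t) (uxx x t) x) ∧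
    ContinuousOn (fun p : ℝ × ℝ => ut p.1 p.2) (Set.univ ×ˢ I) ∧
    ContinuousOn (fun p : ℝ × ℝ => ux p.1 p.2) (Set.univ ×ˢ I) ∧
    ContinuousOn (fun p : ℝ × ℝ => uxx p.1 p.2) (Set.univ ×ˢ I) ∧
    (∀ x : ℝ, ∀ t ∈ I, ut x t = uxx x t + f t (u x t))

/-- `u₁` is steeper than `u₂` (Definition 2.5). -/
def Steeper (T : ℝ) (u₁ u₂ : ℝ → ℝ → ℝ) : Prop :=
  ∀ (t' x₁ : ℝ) (k : ℤ), u₁ x₁ t' = u₂ x₁ (t' + k * T) →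
    (∀ x t : ℝ, u₁ x (t + t') = u₂ x (t + t' + k * T)) ∨
    deriv (fun y => u₁ y t') x₁ < deriv (fun y => u₂ y (t' + k * T)) x₁

/-- `ψ` is a `T`-periodic solution of the ODE `ω' = f(t,ω)`. -/
def IsPeriodicSol (f : ℝ → ℝ → ℝ) (T : ℝ) (ψ : ℝ → ℝ) : Prop :=
  (∀ t : ℝ, HasDerivAt ψ (f t (ψ t)) t) ∧ ∀ t : ℝ, ψ (t + T) = ψ t

/-- `ψ` is isolated from below w.r.t. the ODE. -/
def IsolatedFromBelow (f : ℝ → ℝ → ℝ) (T : ℝ) (ψ : ℝ → ℝ) : Prop :=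
  ¬ ∃ φ : ℕ → ℝ → ℝ, (∀ n, IsPeriodicSol f T (φ n)) ∧ (∀ n t, φ n t < ψ t) ∧
      TendstoUniformly φ ψ atTop

/-- `ψ` is stable from below w.r.t. the ODE. -/
def StableFromBelow (f : ℝ → ℝ → ℝ) (ψ : ℝ → ℝ) : Prop :=
  ∀ ε > 0, ∃ δ > 0, ∀ g : ℝ → ℝ, (∀ t : ℝ, HasDerivAt g (f t (g t)) t) →
    g 0 ∈ Set.Icc (ψ 0 - δ) (ψ 0) → ∀ t ≥ 0, |g t - ψ t| ≤ ε

/-- Hypothesis (H1). -/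
def HypH1 (f : ℝ → ℝ → ℝ) (α : ℝ) (ωα : ℝ → ℝ) : Prop :=
  ∃ u : ℝ → ℝ → ℝ,
    IsSolOn f u (Set.Ioi 0) ∧
    ContinuousOn (fun p : ℝ × ℝ => u p.1 p.2) (Set.univ ×ˢ Set.Ici 0) ∧
    HasCompactSupport (fun x => u x 0) ∧
    (∀ x : ℝ, 0 ≤ u x 0 ∧ u x 0 < α) ∧
    (∀ K : Set ℝ, IsCompact K → ∀ ε > 0, ∃ t₀ : ℝ, ∀ t ≥ t₀, ∀ x ∈ K, |u x t - ωα t| < ε)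

/-- Hypothesis (H2). -/
def HypH2 (f : ℝ → ℝ → ℝ) (T α : ℝ) : Prop :=
  ∀ ψ : ℝ → ℝ, IsPeriodicSol f T ψ → ψ 0 ∈ Set.Ioo 0 α →
    IsolatedFromBelow f T ψ → ¬ StableFromBelow f ψ →
    ∃ φ : ℕ → ℝ → ℝ,
      (∀ n, ContDiff ℝ 1 (φ n)) ∧
      (∀ n t, φ n (t + T) = φ n t) ∧
      (∀ n t, f t (φ n t) ≤ deriv (φ n) t) ∧
      (∀ n t, φ n t < ψ t) ∧
      TendstoUniformly φ ψ atTop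

/-- The solution `ũ(·,·;a)` of (E) with Heaviside-type initial datum `α·H(a−x)`,
bounded between `0` and `ω(α,·)`. -/
def IsHeavisideSol (f : ℝ → ℝ → ℝ) (α a : ℝ) (ωα : ℝ → ℝ) (u : ℝ → ℝ → ℝ) : Prop :=
  IsSolOn f u (Set.Ioi 0) ∧
  (∀ x : ℝ, ∀ t > 0, 0 ≤ u x t ∧ u x t ≤ ωα t) ∧
  ∀ K : Set ℝ, IsCompact K → a ∉ K → ∀ ε > 0, ∃ δ > 0, ∀ t ∈ Set.Ioo (0:ℝ) δ, ∀ x ∈ K,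
    |u x t - α * (if 0 ≤ a - x then 1 else 0)| < ε

/-- `U(x,t) → ψ(t)` as `x → +∞`, locally uniformly in `t`. -/
def LimitAtPlusInf (U : ℝ → ℝ → ℝ) (ψ : ℝ → ℝ) : Prop :=
  ∀ K : Set ℝ, IsCompact K → ∀ ε > 0, ∃ M : ℝ, ∀ x ≥ M, ∀ t ∈ K, |U x t - ψ t| < ε

/-- `U(x,t) → ψ(t)` as `x → −∞`, locally uniformly in `t`. -/
def LimitAtMinusInf (U : ℝ → ℝ → ℝ) (ψ : ℝ → ℝ) : Prop :=
  ∀ K : Set ℝ, IsCompact K → ∀ ε > 0, ∃ M : ℝ, ∀ x ≤ M, ∀ t ∈ K, |U x t - ψ t| < ε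

/-- `U` connects `ωa` (at `x = −∞`) to `ωb` (at `x = +∞`). -/
def Connects (U : ℝ → ℝ → ℝ) (ωa ωb : ℝ → ℝ) : Prop :=
  LimitAtMinusInf U ωa ∧ LimitAtPlusInf U ωb

/-- A pulsating traveling front of (E) with speed `c`, limit `ωa` at `−∞`, `ωb` at `+∞`. -/
def IsPulsatingFront (f : ℝ → ℝ → ℝ) (T : ℝ) (ωa ωb : ℝ → ℝ) (U : ℝ → ℝ → ℝ) (c : ℝ) :
    Prop :=
  IsSolOn f U Set.univ ∧
  (∃ L : ℝ, c = L / T ∧ ∀ x t : ℝ, U x t = U (x - L) (t + T)) ∧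
  Connects U ωa ωb

/-- A propagating terrace of (E) connecting `0` to `ωα`. -/
def IsTerrace (f : ℝ → ℝ → ℝ) (T : ℝ) (ωα : ℝ → ℝ) (N : ℕ)
    (ω : ℕ → ℝ → ℝ) (U : ℕ → ℝ → ℝ → ℝ) (c : ℕ → ℝ) : Prop :=
  1 ≤ N ∧
  (∀ k ≤ N, IsPeriodicSol f T (ω k)) ∧
  (∀ t, ω 0 t = ωα t) ∧ (∀ t, ω N t = 0) ∧
  (∀ k, k < N → ∀ t, ω (k + 1) t < ω k t) ∧
  (∀ k, 1 ≤ k → k ≤ N → IsPulsatingFront f T (ω (k - 1)) (ω k) (U k) (c k)) ∧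
  0 ≤ c 1 ∧ (∀ k, 1 ≤ k → k < N → c k ≤ c (k + 1))

/-- A minimal propagating terrace (Definition 1.4). -/
def IsMinimalTerrace (f : ℝ → ℝ → ℝ) (T : ℝ) (ωα : ℝ → ℝ) (N : ℕ)
    (ω : ℕ → ℝ → ℝ) (U : ℕ → ℝ → ℝ → ℝ) (c : ℕ → ℝ) : Prop :=
  IsTerrace f T ωα N ω U c ∧
  (∀ (N' : ℕ) (ψ : ℕ → ℝ → ℝ) (V : ℕ → ℝ → ℝ → ℝ) (c' : ℕ → ℝ),
      IsTerrace f T ωα N' ψ V c' → ∀ k ≤ N, ∃ j ≤ N', ∀ t, ω k t = ψ j t) ∧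
  (∀ k, 1 ≤ k → k ≤ N → ∀ V : ℝ → ℝ → ℝ, IsSolOn f V Set.univ →
      Connects V (ω (k - 1)) (ω k) → Steeper T (U k) V)


/-- A bounded classical solution of (E) on `ℝ × (0,∞)` with Heaviside-type initial datum
`α·H(a−x)` (attained locally uniformly on `ℝ∖{a}` as `t → 0⁺`). -/
def IsHeavisideSolBdd (f : ℝ → ℝ → ℝ) (α a : ℝ) (u : ℝ → ℝ → ℝ) : Prop :=
  IsSolOn f u (Set.Ioi 0) ∧
  (∃ C : ℝ, ∀ x : ℝ, ∀ t > 0, |u x t| ≤ C) ∧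
  ∀ K : Set ℝ, IsCompact K → a ∉ K → ∀ ε > 0, ∃ δ > 0, ∀ t ∈ Set.Ioo (0:ℝ) δ, ∀ x ∈ K,
    |u x t - α * (if 0 ≤ a - x then 1 else 0)| < ε

/-! ### The error function and the heat-equation barriers -/

/-- The error function without its normalising factor `2 / √π`. -/
def erfInt (y : ℝ) : ℝ := ∫ r in (0 : ℝ)..y, Real.exp (-r ^ 2)

lemma erfInt_hasDerivAt (y : ℝ) : HasDerivAt erfInt (Real.exp (-y ^ 2)) y := by
  have hc : Continuous fun r : ℝ => Real.exp (-r ^ 2) := by fun_prop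
  exact intervalIntegral.integral_hasDerivAt_right (hc.intervalIntegrable _ _)
    (hc.stronglyMeasurableAtFilter _ _) hc.continuousAt

lemma erfInt_continuous : Continuous erfInt :=
  continuous_iff_continuousAt.2 fun y => (erfInt_hasDerivAt y).continuousAt

lemma erfInt_strictMono : StrictMono erfInt :=
  strictMono_of_deriv_pos fun y => by
    rw [(erfInt_hasDerivAt y).deriv]; exact Real.exp_pos _

lemma erfInt_zero : erfInt 0 = 0 := by simp [erfInt]

lemma erfInt_one_pos : 0 < erfInt 1 := by
  have := erfInt_strictMono (zero_lt_one' ℝ)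
  rwa [erfInt_zero] at this

lemma erfInt_neg (y : ℝ) : erfInt (-y) = -erfInt y := by
  have h := intervalIntegral.integral_comp_neg (a := 0) (b := y)
    (fun r : ℝ => Real.exp (-r ^ 2))
  simp only [neg_sq, neg_zero] at h
  rw [erfInt, erfInt, h, intervalIntegral.integral_symm]

/-- Increments of `erfInt` are dominated by those of `arctan`, because
`exp (-y²) ≤ 1 / (1 + y²)`. -/
lemma erfInt_sub_le_arctan {x y : ℝ} (h : x ≤ y) :
    erfInt y - erfInt x ≤ Real.arctan y - Real.arctan x := by
  have hmono : Monotone fun z => Real.arctan z - erfInt z := by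
    have hd : ∀ z, HasDerivAt (fun z => Real.arctan z - erfInt z)
        (1 / (1 + z ^ 2) - Real.exp (-z ^ 2)) z :=
      fun z => (Real.hasDerivAt_arctan z).sub (erfInt_hasDerivAt z)
    refine monotone_of_deriv_nonneg (fun z => (hd z).differentiableAt) fun z => ?_
    rw [(hd z).deriv, sub_nonneg, Real.exp_neg, ← one_div]
    exact one_div_le_one_div_of_le (by positivity) (by linarith [Real.add_one_le_exp (z ^ 2)])
  have := hmono h
  simp only at this
  linarith

lemma erfInt_sub_le_sub {x y : ℝ} (h : x ≤ y) : erfInt y - erfInt x ≤ y - x := by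
  have hmono : Monotone fun z => z - erfInt z := by
    have hd : ∀ z, HasDerivAt (fun z => z - erfInt z) (1 - Real.exp (-z ^ 2)) z :=
      fun z => (hasDerivAt_id z).sub (erfInt_hasDerivAt z)
    refine monotone_of_deriv_nonneg (fun z => (hd z).differentiableAt) fun z => ?_
    rw [(hd z).deriv, sub_nonneg, Real.exp_le_one_iff]
    nlinarith [sq_nonneg z]
  have := hmono h
  simp only at this
  linarith

lemma arctan_le_self_aux {y : ℝ} (h : 0 ≤ y) : Real.arctan y ≤ y := by
  have hmono : Monotone fun z => z - Real.arctan z := by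
    have hd : ∀ z, HasDerivAt (fun z => z - Real.arctan z) (1 - 1 / (1 + z ^ 2)) z :=
      fun z => (hasDerivAt_id z).sub (Real.hasDerivAt_arctan z)
    refine monotone_of_deriv_nonneg (fun z => (hd z).differentiableAt) fun z => ?_
    rw [(hd z).deriv, sub_nonneg, div_le_one (by positivity)]
    nlinarith [sq_nonneg z]
  have := hmono h
  simp only [Real.arctan_zero] at this
  linarith

/-- The solution of the heat equation whose initial datum is `√π` times the indicator function
of `[p - r, p + r]`. -/
def heatBump (p r x t : ℝ) : ℝ :=
  erfInt ((x - p + r) / (2 * √t)) - erfInt ((x - p - r) / (2 * √t))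

/-- The common value of `∂ₜ` and `∂ₓ²` of `erfInt ((x - q) / (2 * √t))`. -/
def erfHeat (q x t : ℝ) : ℝ :=
  Real.exp (-((x - q) / (2 * √t)) ^ 2) * (-((x - q) / (2 * √t)) / (2 * t))

lemma hasDerivAt_erf_time (q x : ℝ) {t : ℝ} (ht : 0 < t) :
    HasDerivAt (fun s => erfInt ((x - q) / (2 * √s))) (erfHeat q x t) t := by
  have hs : 0 < √t := Real.sqrt_pos.2 ht
  have h1 : HasDerivAt (fun s => (x - q) / (2 * √s)) (-((x - q) / (2 * √t)) / (2 * t)) t := by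
    have h := (((Real.hasDerivAt_sqrt ht.ne').const_mul 2).inv (by positivity)).const_mul (x - q)
    refine (h.congr_deriv ?_).congr_of_eventuallyEq (Eventually.of_forall fun s => ?_)
    · have : t = √t * √t := (Real.mul_self_sqrt ht.le).symm
      rw [show -((x - q) / (2 * √t)) / (2 * t) = -((x - q) / (2 * √t)) / (2 * (√t * √t)) by
        rw [← this]]
      field_simp
    · simp [div_eq_mul_inv]
  exact (erfInt_hasDerivAt _).comp t h1

lemma hasDerivAt_erf_space (q x t : ℝ) :
    HasDerivAt (fun y => erfInt ((y - q) / (2 * √t)))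
      (Real.exp (-((x - q) / (2 * √t)) ^ 2) / (2 * √t)) x := by
  have h1 : HasDerivAt (fun y => (y - q) / (2 * √t)) (1 / (2 * √t)) x :=
    ((hasDerivAt_id x).sub_const q).div_const _
  exact ((erfInt_hasDerivAt _).comp x h1).congr_deriv (by ring)

lemma hasDerivAt_erf_space_space (q x : ℝ) {t : ℝ} (ht : 0 < t) :
    HasDerivAt (fun y => Real.exp (-((y - q) / (2 * √t)) ^ 2) / (2 * √t)) (erfHeat q x t) x := by
  have hs : 0 < √t := Real.sqrt_pos.2 ht
  have h1 : HasDerivAt (fun y => (y - q) / (2 * √t)) (1 / (2 * √t)) x :=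
    ((hasDerivAt_id x).sub_const q).div_const _
  refine (((h1.pow 2).neg.exp).div_const (2 * √t)).congr_deriv ?_
  have : t = √t * √t := (Real.mul_self_sqrt ht.le).symm
  rw [erfHeat, show -((x - q) / (2 * √t)) / (2 * t) = -((x - q) / (2 * √t)) / (2 * (√t * √t)) by
    rw [← this]]
  simp only [Pi.neg_apply, Pi.pow_apply]
  field_simp
  simp only [Nat.cast_ofNat, Nat.add_one_sub_one, pow_one]
  field_simp

/-- Spatial derivative of `heatBump`. -/
def heatBumpX (p r x t : ℝ) : ℝ :=
  Real.exp (-((x - (p - r)) / (2 * √t)) ^ 2) / (2 * √t) -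
    Real.exp (-((x - (p + r)) / (2 * √t)) ^ 2) / (2 * √t)

/-- The common value of the time derivative and the second space derivative of `heatBump`. -/
def heatBumpT (p r x t : ℝ) : ℝ := erfHeat (p - r) x t - erfHeat (p + r) x t

lemma heatBump_eq (p r x t : ℝ) : heatBump p r x t =
    erfInt ((x - (p - r)) / (2 * √t)) - erfInt ((x - (p + r)) / (2 * √t)) := by
  simp only [heatBump]; congr 3 <;> ring

lemma heatBump_hasDerivAt_time (p r x : ℝ) {t : ℝ} (ht : 0 < t) :
    HasDerivAt (fun s => heatBump p r x s) (heatBumpT p r x t) t := by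
  simp only [heatBump_eq]
  exact (hasDerivAt_erf_time _ _ ht).sub (hasDerivAt_erf_time _ _ ht)

lemma heatBump_hasDerivAt_space (p r x t : ℝ) :
    HasDerivAt (fun y => heatBump p r y t) (heatBumpX p r x t) x := by
  simp only [heatBump_eq]
  exact (hasDerivAt_erf_space _ _ _).sub (hasDerivAt_erf_space _ _ _)

lemma heatBumpX_hasDerivAt_space (p r x : ℝ) {t : ℝ} (ht : 0 < t) :
    HasDerivAt (fun y => heatBumpX p r y t) (heatBumpT p r x t) x :=
  (hasDerivAt_erf_space_space _ _ ht).sub (hasDerivAt_erf_space_space _ _ ht)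

lemma heatBump_continuousOn (p r : ℝ) :
    ContinuousOn (fun z : ℝ × ℝ => heatBump p r z.1 z.2) (Set.univ ×ˢ Set.Ioi 0) := by
  have h : ∀ z ∈ (Set.univ ×ˢ Set.Ioi 0 : Set (ℝ × ℝ)), 2 * √z.2 ≠ 0 := fun z hz => by
    have : 0 < √z.2 := Real.sqrt_pos.2 hz.2
    positivity
  have h2 : ContinuousOn (fun z : ℝ × ℝ => 2 * √z.2) (Set.univ ×ˢ Set.Ioi 0) := by fun_prop
  unfold heatBump
  refine ContinuousOn.sub ?_ ?_
  · exact erfInt_continuous.comp_continuousOn (ContinuousOn.div (by fun_prop) h2 h)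
  · exact erfInt_continuous.comp_continuousOn (ContinuousOn.div (by fun_prop) h2 h)

lemma heatBump_arg_lt (p x : ℝ) {r t : ℝ} (hr : 0 < r) (ht : 0 < t) :
    (x - p - r) / (2 * √t) < (x - p + r) / (2 * √t) := by
  have hs : 0 < √t := Real.sqrt_pos.2 ht
  exact div_lt_div_of_pos_right (by linarith) (by positivity)

lemma heatBump_pos (p x : ℝ) {r t : ℝ} (hr : 0 < r) (ht : 0 < t) : 0 < heatBump p r x t :=
  sub_pos.2 (erfInt_strictMono (heatBump_arg_lt p x hr ht))

lemma heatBump_le_pi (p x : ℝ) {r t : ℝ} (hr : 0 < r) (ht : 0 < t) : heatBump p r x t ≤ π := by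
  have h := erfInt_sub_le_arctan (heatBump_arg_lt p x hr ht).le
  have h1 := Real.arctan_lt_pi_div_two ((x - p + r) / (2 * √t))
  have h2 := Real.neg_pi_div_two_lt_arctan ((x - p - r) / (2 * √t))
  unfold heatBump
  linarith

/-- Away from `t = 0` a narrow bump is uniformly small. -/
lemma heatBump_le_div (p x : ℝ) {r t : ℝ} (hr : 0 < r) (ht : 0 < t) :
    heatBump p r x t ≤ r / √t := by
  have hs : 0 < √t := Real.sqrt_pos.2 ht
  refine (erfInt_sub_le_sub (heatBump_arg_lt p x hr ht).le).trans_eq ?_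
  field_simp
  ring

/-- On the support of its initial datum the bump stays bounded below for short times. -/
lemma heatBump_ge {p x r t : ℝ} (ht : 0 < t) (hx : |x - p| ≤ r) (htr : 2 * √t ≤ r) :
    erfInt 1 ≤ heatBump p r x t := by
  have hs : 0 < √t := Real.sqrt_pos.2 ht
  obtain ⟨h1, h2⟩ := abs_le.1 hx
  have hm := erfInt_strictMono.monotone
  unfold heatBump
  rcases le_total 0 (x - p) with h | h
  · have e1 : erfInt 1 ≤ erfInt ((x - p + r) / (2 * √t)) :=
      hm ((one_le_div (by positivity)).2 (by linarith))
    have e2 : erfInt ((x - p - r) / (2 * √t)) ≤ erfInt 0 :=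
      hm (div_nonpos_of_nonpos_of_nonneg (by linarith) (by positivity))
    rw [erfInt_zero] at e2
    linarith
  · have e1 : erfInt 0 ≤ erfInt ((x - p + r) / (2 * √t)) :=
      hm (div_nonneg (by linarith) (by positivity))
    have e2 : erfInt ((x - p - r) / (2 * √t)) ≤ erfInt (-1) :=
      hm ((div_le_iff₀ (by positivity)).2 (by linarith))
    rw [erfInt_zero] at e1
    rw [erfInt_neg] at e2
    linarith

lemma heatBump_le_sqrt_right {p x r t ρ : ℝ} (hr : 0 < r) (ht : 0 < t) (hρ : 0 < ρ)
    (hx : p + r + ρ ≤ x) : heatBump p r x t ≤ 2 * √t / ρ := by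
  have hs : 0 < √t := Real.sqrt_pos.2 ht
  have h := erfInt_sub_le_arctan (heatBump_arg_lt p x hr ht).le
  have h1 := Real.arctan_lt_pi_div_two ((x - p + r) / (2 * √t))
  have hy : ρ / (2 * √t) ≤ (x - p - r) / (2 * √t) :=
    div_le_div_of_nonneg_right (by linarith) (by positivity)
  have h2 := Real.arctan_strictMono.monotone hy
  have h3 := Real.arctan_inv_of_pos (x := ρ / (2 * √t)) (by positivity)
  have h4 : Real.arctan (ρ / (2 * √t))⁻¹ ≤ (ρ / (2 * √t))⁻¹ :=
    arctan_le_self_aux (by positivity)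
  rw [inv_div] at h3 h4
  unfold heatBump
  linarith

lemma heatBump_reflect (p r x t : ℝ) : heatBump p r x t = heatBump p r (2 * p - x) t := by
  unfold heatBump
  rw [show (2 * p - x - p + r) / (2 * √t) = -((x - p - r) / (2 * √t)) by ring,
    show (2 * p - x - p - r) / (2 * √t) = -((x - p + r) / (2 * √t)) by ring, erfInt_neg, erfInt_neg]
  ring

/-- Off the support of its initial datum the bump tends to `0` as `t → 0⁺`, uniformly at
positive distance. -/
lemma heatBump_le_sqrt {p x r t ρ : ℝ} (hr : 0 < r) (ht : 0 < t) (hρ : 0 < ρ)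
    (hx : r + ρ ≤ |x - p|) : heatBump p r x t ≤ 2 * √t / ρ := by
  rcases le_abs.1 hx with h | h
  · exact heatBump_le_sqrt_right hr ht hρ (by linarith)
  · rw [heatBump_reflect]
    exact heatBump_le_sqrt_right hr ht hρ (by linarith)

/-! ### The comparison principle -/

lemma second_deriv_nonpos {h h' : ℝ → ℝ} {h'' x : ℝ} (hd : ∀ y, HasDerivAt h (h' y) y)
    (hd' : HasDerivAt h' h'' x) (hmax : IsLocalMax h x) : h'' ≤ 0 := by
  by_contra! hpos
  have e : deriv h = h' := funext fun y => (hd y).deriv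
  have hmin : IsLocalMin h x := by
    apply isLocalMin_of_deriv_deriv_pos
    · rw [e, hd'.deriv]; exact hpos
    · exact hmax.deriv_eq_zero
    · exact (hd x).continuousAt
  -- A local extremum of both kinds is locally constant, so that `h'' = 0`.
  have hconst : h =ᶠ[𝓝 x] fun _ => h x := by
    filter_upwards [hmax, hmin] with y h1 h2 using le_antisymm h1 h2
  have h0 : h' =ᶠ[𝓝 x] fun _ => 0 := by
    filter_upwards [hconst.eventuallyEq_nhds] with y hy
    rw [← (hd y).deriv, hy.deriv_eq, deriv_const]
  have := h0.deriv_eq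
  rw [hd'.deriv, deriv_const] at this
  linarith

lemma deriv_nonneg_of_max_left {h : ℝ → ℝ} {h' s t : ℝ} (hst : s < t) (hd : HasDerivAt h h' t)
    (hmax : ∀ r ∈ Set.Icc s t, h r ≤ h t) : 0 ≤ h' := by
  have hl : IsLocalMaxOn h (Set.Icc s t) t := by
    filter_upwards [self_mem_nhdsWithin] with r hr using hmax r hr
  have hc : s - t ∈ posTangentConeAt (Set.Icc s t) t :=
    sub_mem_posTangentConeAt_of_segment_subset (by
      rw [segment_symm, segment_eq_Icc hst.le])
  have := hl.hasFDerivWithinAt_nonpos hd.hasFDerivAt.hasFDerivWithinAt hc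
  simp at this
  nlinarith

set_option maxHeartbeats 1000000 in
/-- Parabolic comparison on `ℝ × (0, t₀]`: a function `d` that is bounded above, satisfies
`dₜ ≤ dₓₓ + L d` wherever it is positive, and has a nonpositive limit superior as `t → 0⁺`,
uniformly on bounded sets at positive distance from two exceptional points `a₁`, `a₂`, is
nonpositive. The exceptional points are absorbed by narrow bumps `heatBump`, spatial infinity by
a small multiple of `1 + x² + 3t`. -/
lemma comparison {d dt dx dxx : ℝ → ℝ → ℝ} {a₁ a₂ M L t₀ : ℝ} (hL : 0 ≤ L)
    (hdt : ∀ x t, 0 < t → HasDerivAt (fun s => d x s) (dt x t) t)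
    (hdx : ∀ x t, 0 < t → HasDerivAt (fun y => d y t) (dx x t) x)
    (hdxx : ∀ x t, 0 < t → HasDerivAt (fun y => dx y t) (dxx x t) x)
    (hcont : ContinuousOn (fun z : ℝ × ℝ => d z.1 z.2) (Set.univ ×ˢ Set.Ioi 0))
    (hM : ∀ x t, 0 < t → t ≤ t₀ → d x t ≤ M)
    (hineq : ∀ x t, 0 < t → t ≤ t₀ → 0 < d x t → dt x t ≤ dxx x t + L * d x t)
    (hstart : ∀ R ρ ε : ℝ, 0 < ρ → 0 < ε → ∃ δ > 0, ∀ t, 0 < t → t < δ → ∀ x, |x| ≤ R →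
      ρ ≤ |x - a₁| → ρ ≤ |x - a₂| → d x t < ε) :
    ∀ x t, 0 < t → t ≤ t₀ → d x t ≤ 0 := by
  intro x₀ τ hτ hτt₀
  by_contra! hpos
  have hMpos : 0 < M := hpos.trans_le (hM _ _ hτ hτt₀)
  set θ := Real.exp (-L * τ) * d x₀ τ with hθ
  have hθpos : 0 < θ := by positivity
  have hE := erfInt_one_pos
  have hsτ : 0 < √τ := Real.sqrt_pos.2 hτ
  set A := M / erfInt 1 with hA
  have hApos : 0 < A := by positivity
  -- `ρ` and `η` make each of the three parts of the barrier at most `θ / 4` at `(x₀, τ)`.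
  set ρ := θ * √τ / (4 * A) with hρ
  have hρpos : 0 < ρ := by positivity
  set η := θ / (4 * (1 + x₀ ^ 2 + 3 * τ)) with hη
  have hηpos : 0 < η := by positivity
  let B : ℝ → ℝ → ℝ := fun x t =>
    A * (heatBump a₁ ρ x t + heatBump a₂ ρ x t) + η * (1 + x ^ 2 + 3 * t)
  let g : ℝ → ℝ → ℝ := fun x t => Real.exp (-L * t) * d x t - B x t
  have hg0 : 0 < g x₀ τ := by
    have h1 := heatBump_le_div a₁ x₀ hρpos hτ
    have h2 := heatBump_le_div a₂ x₀ hρpos hτ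
    have h3 : A * (ρ / √τ) = θ / 4 := by rw [hρ]; field_simp
    have h4 : η * (1 + x₀ ^ 2 + 3 * τ) = θ / 4 := by rw [hη]; field_simp
    have h5 := mul_le_mul_of_nonneg_left h1 hApos.le
    have h6 := mul_le_mul_of_nonneg_left h2 hApos.le
    simp only [g, B, ← hθ]
    linarith
  have hgM : ∀ x t, 0 < t → t ≤ t₀ → Real.exp (-L * t) * d x t ≤ M := by
    intro x t h1 h2
    have he : Real.exp (-L * t) ≤ 1 := Real.exp_le_one_iff.2 (by nlinarith)
    calc Real.exp (-L * t) * d x t ≤ Real.exp (-L * t) * M :=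
          mul_le_mul_of_nonneg_left (hM x t h1 h2) (Real.exp_pos _).le
      _ ≤ 1 * M := mul_le_mul_of_nonneg_right he hMpos.le
      _ = M := one_mul M
  set R := |x₀| + 1 + M / η with hR
  have hR1 : 1 ≤ R := by
    have := abs_nonneg x₀
    have : 0 < M / η := by positivity
    linarith
  have hRM : M ≤ η * R ^ 2 := by
    have h1 : M / η ≤ R := by linarith [abs_nonneg x₀]
    have h2 : M ≤ R * η := (div_le_iff₀ hηpos).1 h1
    nlinarith [mul_nonneg hηpos.le (mul_nonneg (by linarith : (0:ℝ) ≤ R) (sub_nonneg.2 hR1))]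
  obtain ⟨δ, hδ, hstart⟩ := hstart R ρ η hρpos hηpos
  set σ := min (min (δ / 2) (τ / 2)) (ρ ^ 2 / 4) with hσ
  have hσpos : 0 < σ := by positivity
  have hσδ : σ < δ := ((min_le_left _ _).trans (min_le_left _ _)).trans_lt (by linarith)
  have hστ : σ < τ := ((min_le_left _ _).trans (min_le_right _ _)).trans_lt (by linarith)
  have hσρ : 2 * √σ ≤ ρ := by
    have : √σ ≤ ρ / 2 := Real.sqrt_le_iff.2 ⟨by positivity, (min_le_right _ _).trans (by linarith)⟩
    linarith
  have hgcont : ContinuousOn (fun z : ℝ × ℝ => g z.1 z.2) (Set.univ ×ˢ Set.Ioi 0) := by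
    simp only [g, B]
    refine ContinuousOn.sub (ContinuousOn.mul (by fun_prop) hcont) (ContinuousOn.add
      (ContinuousOn.mul (by fun_prop) ((heatBump_continuousOn _ _).add (heatBump_continuousOn _ _)))
      (by fun_prop))
  have hsub : (Set.Icc (-R) R ×ˢ Set.Icc σ τ : Set (ℝ × ℝ)) ⊆ Set.univ ×ˢ Set.Ioi 0 :=
    fun z hz => ⟨trivial, hσpos.trans_le hz.2.1⟩
  have hx₀R : |x₀| ≤ R := by
    have : 0 < M / η := by positivity
    linarith
  obtain ⟨⟨x, t⟩, ⟨hxm, htm⟩, hmax⟩ := (isCompact_Icc.prod isCompact_Icc).exists_isMaxOn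
    (s := (Set.Icc (-R) R ×ˢ Set.Icc σ τ : Set (ℝ × ℝ)))
    ⟨(x₀, τ), ⟨abs_le.1 hx₀R, hστ.le, le_rfl⟩⟩ (hgcont.mono hsub)
  simp only at hxm htm
  have hmax' : ∀ y ∈ Set.Icc (-R) R, ∀ s ∈ Set.Icc σ τ, g y s ≤ g x t :=
    fun y hy s hs => hmax (show (y, s) ∈ Set.Icc (-R) R ×ˢ Set.Icc σ τ from ⟨hy, hs⟩)
  have htpos : 0 < t := hσpos.trans_le htm.1
  have htt₀ : t ≤ t₀ := htm.2.trans hτt₀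
  have hgpos : 0 < g x t := hg0.trans_le (hmax' _ (abs_le.1 hx₀R) _ ⟨hστ.le, le_rfl⟩)
  have hb1 := heatBump_pos a₁ x hρpos htpos
  have hb2 := heatBump_pos a₂ x hρpos htpos
  have hBb : A * (heatBump a₁ ρ x t + heatBump a₂ ρ x t) + η * (1 + x ^ 2 + 3 * t)
      < Real.exp (-L * t) * d x t := sub_pos.1 hgpos
  have hq : 0 ≤ η * (1 + x ^ 2 + 3 * t) := by positivity
  have hbb : 0 ≤ A * (heatBump a₁ ρ x t + heatBump a₂ ρ x t) := by positivity
  have hxR : x ^ 2 < R ^ 2 := by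
    by_contra! hcon
    have := hgM x t htpos htt₀
    have : η * R ^ 2 ≤ η * (1 + x ^ 2 + 3 * t) := mul_le_mul_of_nonneg_left (by linarith) hηpos.le
    linarith
  have hxabs : |x| < R := by
    have := sq_lt_sq.1 hxR
    rwa [abs_of_nonneg (by linarith : (0:ℝ) ≤ R)] at this
  have hσt : σ < t := by
    refine lt_of_le_of_ne htm.1 fun hc => ?_
    rw [← hc] at hBb hb1 hb2 hq hbb
    have hAM : A * erfInt 1 = M := by rw [hA]; field_simp
    have hle := hgM x σ hσpos (hστ.le.trans hτt₀)
    rcases le_or_gt |x - a₁| ρ with h | h1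
    · have := mul_le_mul_of_nonneg_left (heatBump_ge hσpos h hσρ) hApos.le
      have : 0 < A * heatBump a₂ ρ x σ := by positivity
      linarith
    rcases le_or_gt |x - a₂| ρ with h | h2
    · have := mul_le_mul_of_nonneg_left (heatBump_ge hσpos h hσρ) hApos.le
      have : 0 < A * heatBump a₁ ρ x σ := by positivity
      linarith
    have hlt := hstart σ hσpos hσδ x hxabs.le h1.le h2.le
    have hd : Real.exp (-L * σ) * d x σ ≤ η := by
      have he : Real.exp (-L * σ) ≤ 1 := Real.exp_le_one_iff.2 (by nlinarith)
      calc Real.exp (-L * σ) * d x σ ≤ Real.exp (-L * σ) * η :=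
            mul_le_mul_of_nonneg_left hlt.le (Real.exp_pos _).le
        _ ≤ 1 * η := mul_le_mul_of_nonneg_right he hηpos.le
        _ = η := one_mul η
    have : η * 1 ≤ η * (1 + x ^ 2 + 3 * σ) := mul_le_mul_of_nonneg_left (by linarith [sq_nonneg x]) hηpos.le
    linarith
  have hgt : HasDerivAt (fun s => g x s)
      (Real.exp (-L * t) * (dt x t - L * d x t)
        - (A * (heatBumpT a₁ ρ x t + heatBumpT a₂ ρ x t) + η * 3)) t := by
    have h1 : HasDerivAt (fun s => Real.exp (-L * s)) (Real.exp (-L * t) * (-L * 1)) t :=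
      ((hasDerivAt_id t).const_mul (-L)).exp
    have h2 : HasDerivAt (fun s => 1 + x ^ 2 + 3 * s) (3 * 1) t :=
      ((hasDerivAt_id t).const_mul 3).const_add _
    refine ((h1.mul (hdt x t htpos)).sub ((((heatBump_hasDerivAt_time a₁ ρ x htpos).add
      (heatBump_hasDerivAt_time a₂ ρ x htpos)).const_mul A).add (h2.const_mul η))).congr_deriv ?_
    ring
  have hgx : ∀ y, HasDerivAt (fun y => g y t)
      (Real.exp (-L * t) * dx y t
        - (A * (heatBumpX a₁ ρ y t + heatBumpX a₂ ρ y t) + η * (2 * y))) y := by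
    intro y
    have h2 : HasDerivAt (fun y => 1 + y ^ 2 + 3 * t) (2 * y) y := by
      have := (((hasDerivAt_id y).pow 2).const_add 1).add_const (3 * t)
      simpa using this
    exact ((hdx y t htpos).const_mul _).sub ((((heatBump_hasDerivAt_space a₁ ρ y t).add
      (heatBump_hasDerivAt_space a₂ ρ y t)).const_mul A).add (h2.const_mul η))
  have hgxx : HasDerivAt (fun y => Real.exp (-L * t) * dx y t
        - (A * (heatBumpX a₁ ρ y t + heatBumpX a₂ ρ y t) + η * (2 * y)))
      (Real.exp (-L * t) * dxx x t
        - (A * (heatBumpT a₁ ρ x t + heatBumpT a₂ ρ x t) + η * (2 * 1))) x :=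
    ((hdxx x t htpos).const_mul _).sub ((((heatBumpX_hasDerivAt_space a₁ ρ x htpos).add
      (heatBumpX_hasDerivAt_space a₂ ρ x htpos)).const_mul A).add
      (((hasDerivAt_id x).const_mul 2).const_mul η))
  have hlmax : IsLocalMax (fun y => g y t) x := by
    filter_upwards [Icc_mem_nhds (abs_lt.1 hxabs).1 (abs_lt.1 hxabs).2] with y hy
    exact hmax' y hy t htm
  have k1 := second_deriv_nonpos hgx hgxx hlmax
  have k2 := deriv_nonneg_of_max_left hσt hgt fun s hs =>
    hmax' x hxm s ⟨hs.1, hs.2.trans htm.2⟩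
  have hdpos : 0 < d x t := by
    have : 0 < Real.exp (-L * t) * d x t := by linarith
    exact (mul_pos_iff_of_pos_left (Real.exp_pos _)).1 this
  have k3 := mul_le_mul_of_nonneg_left
    (sub_nonpos.2 (hineq x t htpos htt₀ hdpos)) (Real.exp_pos (-L * t)).le
  have k4 : Real.exp (-L * t) * (dt x t - (dxx x t + L * d x t)) =
      Real.exp (-L * t) * (dt x t - L * d x t) - Real.exp (-L * t) * dxx x t := by ring
  linarith

/-! ### Comparison of solutions of the semilinear equation -/

lemma IsSolOn.continuousOn {f u : ℝ → ℝ → ℝ} (h : IsSolOn f u (Set.Ioi 0)) :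
    ContinuousOn (fun z : ℝ × ℝ => u z.1 z.2) (Set.univ ×ˢ Set.Ioi 0) := by
  obtain ⟨ut, ux, uxx, h1, h2, -, c1, c2, -, -⟩ := h
  have ho : IsOpen (Set.univ ×ˢ Set.Ioi 0 : Set (ℝ × ℝ)) := isOpen_univ.prod isOpen_Ioi
  intro z hz
  have hm := ho.mem_nhds hz
  let T : ℝ →L[ℝ] (ℝ →L[ℝ] ℝ) := ContinuousLinearMap.toSpanSingletonCLE.toContinuousLinearMap
  have hs := hasStrictFDerivAt_uncurry_coprod (𝕜 := ℝ) (u := z) (f := u)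
    (f₁ := fun x t => T (ux x t)) (f₂ := fun x t => T (ut x t))
    (by
      filter_upwards [hm] with v hv
      exact (h2 v.1 v.2 hv.2).hasFDerivAt)
    (by
      filter_upwards [hm] with v hv
      exact (h1 v.1 v.2 hv.2).hasFDerivAt)
    (T.continuous.continuousAt.comp (c2.continuousAt hm))
    (T.continuous.continuousAt.comp (c1.continuousAt hm))
  exact hs.continuousAt.continuousWithinAt

lemma exists_lipschitz {f : ℝ → ℝ → ℝ} (hf : ContDiff ℝ 2 (Function.uncurry f)) (t₀ C : ℝ) :
    ∃ L : ℝ, 0 ≤ L ∧ ∀ t v w, 0 < t → t ≤ t₀ → |v| ≤ C → |w| ≤ C →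
      |f t v - f t w| ≤ L * |v - w| := by
  have hl : LocallyLipschitz (Function.uncurry f) := (hf.of_le (by norm_num)).locallyLipschitz
  obtain ⟨K, hK⟩ := (hl.locallyLipschitzOn
    (s := Set.Icc 0 t₀ ×ˢ Set.Icc (-C) C)).exists_lipschitzOnWith_of_compact
    (isCompact_Icc.prod isCompact_Icc)
  refine ⟨K, K.2, fun t v w h1 h2 hv hw => ?_⟩
  have := hK.dist_le_mul (t, v) ⟨⟨h1.le, h2⟩, abs_le.1 hv⟩ (t, w) ⟨⟨h1.le, h2⟩, abs_le.1 hw⟩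
  simpa [Prod.dist_eq, Real.dist_eq] using this

/-- Comparison of two bounded solutions up to an exponential error: if initially
`u₁ - u₂ ≤ K exp (σ (x - b))`, with `σ = ±1` and up to two exceptional points, then
`u₁ - u₂ ≤ K exp (L t + t + σ (x - b))`. The case `K = 0` is the usual comparison principle. -/
lemma sol_compare {f : ℝ → ℝ → ℝ} (hf : ContDiff ℝ 2 (Function.uncurry f))
    {u₁ u₂ : ℝ → ℝ → ℝ} (h₁ : IsSolOn f u₁ (Set.Ioi 0)) (h₂ : IsSolOn f u₂ (Set.Ioi 0))
    {C t₀ : ℝ} (hC₁ : ∀ x t, 0 < t → t ≤ t₀ → |u₁ x t| ≤ C)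
    (hC₂ : ∀ x t, 0 < t → t ≤ t₀ → |u₂ x t| ≤ C)
    {K σ : ℝ} (b : ℝ) (hK : 0 ≤ K) (hσ : σ * σ = 1) {a₁ a₂ : ℝ}
    (hstart : ∀ R ρ ε : ℝ, 0 < ρ → 0 < ε → ∃ δ > 0, ∀ t, 0 < t → t < δ → ∀ x, |x| ≤ R →
      ρ ≤ |x - a₁| → ρ ≤ |x - a₂| → u₁ x t - u₂ x t < K * Real.exp (σ * (x - b)) + ε) :
    ∃ L : ℝ, ∀ x t, 0 < t → t ≤ t₀ →
      u₁ x t - u₂ x t ≤ K * Real.exp (L * t + t + σ * (x - b)) := by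
  obtain ⟨L, hL0, hL⟩ := exists_lipschitz hf t₀ C
  refine ⟨L, ?_⟩
  have c₁ := h₁.continuousOn
  have c₂ := h₂.continuousOn
  obtain ⟨ut₁, ux₁, uxx₁, dt₁, dx₁, dxx₁, -, -, -, e₁⟩ := h₁
  obtain ⟨ut₂, ux₂, uxx₂, dt₂, dx₂, dxx₂, -, -, -, e₂⟩ := h₂
  let B : ℝ → ℝ → ℝ := fun x t => K * Real.exp (L * t + t + σ * (x - b))
  have hB0 : ∀ x t, 0 ≤ B x t := fun x t => by positivity
  have hBt : ∀ x t, HasDerivAt (fun s => B x s) ((L + 1) * B x t) t := fun x t => by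
    have h : HasDerivAt (fun s => L * s + s + σ * (x - b)) (L * 1 + 1) t :=
      (((hasDerivAt_id t).const_mul L).add (hasDerivAt_id t)).add_const _
    exact (h.exp.const_mul K).congr_deriv (by simp only [B]; ring)
  have hBx : ∀ x t, HasDerivAt (fun y => B y t) (σ * B x t) x := fun x t => by
    have h : HasDerivAt (fun y => L * t + t + σ * (y - b)) (σ * 1) x :=
      (((hasDerivAt_id x).sub_const b).const_mul σ).const_add _
    exact (h.exp.const_mul K).congr_deriv (by simp only [B]; ring)
  have key := comparison (d := fun x t => u₁ x t - u₂ x t - B x t)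
    (dt := fun x t => ut₁ x t - ut₂ x t - (L + 1) * B x t)
    (dx := fun x t => ux₁ x t - ux₂ x t - σ * B x t)
    (dxx := fun x t => uxx₁ x t - uxx₂ x t - σ * (σ * B x t))
    (a₁ := a₁) (a₂ := a₂) (M := 2 * C) (L := L) (t₀ := t₀) hL0
    (fun x t ht => ((dt₁ x t ht).sub (dt₂ x t ht)).sub (hBt x t))
    (fun x t ht => ((dx₁ x t ht).sub (dx₂ x t ht)).sub (hBx x t))
    (fun x t ht => ((dxx₁ x t ht).sub (dxx₂ x t ht)).sub ((hBx x t).const_mul σ))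
    ((c₁.sub c₂).sub (by fun_prop))
    (fun x t h1 h2 => by
      have := (abs_le.1 (hC₁ x t h1 h2)).2
      have := (abs_le.1 (hC₂ x t h1 h2)).1
      have := hB0 x t
      linarith)
    (fun x t h1 h2 hpos => by
      have hw : 0 < u₁ x t - u₂ x t := by have := hB0 x t; linarith
      have h3 := (abs_le.1 (hL t _ _ h1 h2 (hC₁ x t h1 h2) (hC₂ x t h1 h2))).2
      rw [abs_of_pos hw] at h3
      rw [e₁ x t h1, e₂ x t h1, ← mul_assoc σ, hσ]
      linarith)
    (fun R ρ ε hρ hε => by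
      obtain ⟨δ, hδ, h⟩ := hstart R ρ ε hρ hε
      refine ⟨δ, hδ, fun t h1 h2 x hx hx1 hx2 => ?_⟩
      have h3 := h t h1 h2 x hx hx1 hx2
      have : K * Real.exp (σ * (x - b)) ≤ B x t :=
        mul_le_mul_of_nonneg_left (Real.exp_le_exp.2 (by nlinarith)) hK
      linarith)
  intro x t h1 h2
  have := key x t h1 h2
  simp only [B] at this
  linarith

/-- Quantitative strong maximum principle: an ordered pair of solutions separated by `m` on an
interval at time `t₁` is separated by `κ m` at any later point, with `κ > 0` independent of the
pair and of `m`. The lower barrier is `(m / π) exp (-L s)` times a `heatBump`. -/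
lemma exists_separation {f : ℝ → ℝ → ℝ} (hf : ContDiff ℝ 2 (Function.uncurry f))
    (C p x : ℝ) {r t₁ t₂ : ℝ} (hr : 0 < r) (ht₁ : 0 < t₁) (ht : t₁ < t₂) :
    ∃ κ > 0, ∀ u₁ u₂ : ℝ → ℝ → ℝ, IsSolOn f u₁ (Set.Ioi 0) → IsSolOn f u₂ (Set.Ioi 0) →
      (∀ x t, 0 < t → |u₁ x t| ≤ C) → (∀ x t, 0 < t → |u₂ x t| ≤ C) →
      (∀ x t, 0 < t → u₁ x t ≤ u₂ x t) → ∀ m > 0,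
      (∀ y, |y - p| ≤ r → m ≤ u₂ y t₁ - u₁ y t₁) → κ * m ≤ u₂ x t₂ - u₁ x t₂ := by
  obtain ⟨L, hL0, hL⟩ := exists_lipschitz hf t₂ C
  have hz := heatBump_pos p x hr (sub_pos.2 ht)
  refine ⟨Real.exp (-L * (t₂ - t₁)) * heatBump p r x (t₂ - t₁) / π, by positivity, ?_⟩
  intro u₁ u₂ h₁ h₂ hC₁ hC₂ hle m hm hsep
  have c₁ := h₁.continuousOn
  have c₂ := h₂.continuousOn
  obtain ⟨ut₁, ux₁, uxx₁, dt₁, dx₁, dxx₁, -, -, -, e₁⟩ := h₁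
  obtain ⟨ut₂, ux₂, uxx₂, dt₂, dx₂, dxx₂, -, -, -, e₂⟩ := h₂
  have hshift : ∀ {s : ℝ}, 0 < s → 0 < t₁ + s := fun h => by linarith
  have hcw : ContinuousOn (fun z : ℝ × ℝ => u₂ z.1 z.2 - u₁ z.1 z.2) (Set.univ ×ˢ Set.Ioi 0) :=
    c₂.sub c₁
  have hcshift : ContinuousOn (fun z : ℝ × ℝ => u₂ z.1 (t₁ + z.2) - u₁ z.1 (t₁ + z.2))
      (Set.univ ×ˢ Set.Ici 0) :=
    hcw.comp (f := fun z : ℝ × ℝ => (z.1, t₁ + z.2)) (by fun_prop)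
      fun z hz => ⟨trivial, by have := hz.2; simp only [Set.mem_Ici] at this; simp; linarith⟩
  let e : ℝ → ℝ := fun s => Real.exp (-L * s)
  have he : ∀ s, HasDerivAt e (-L * e s) s := fun s => by
    have h1 : HasDerivAt (fun s => -L * s) (-L * 1) s := (hasDerivAt_id s).const_mul (-L)
    exact h1.exp.congr_deriv (by simp only [e]; ring)
  have he0 : ∀ s, 0 < e s := fun s => Real.exp_pos _
  have hec : Continuous e := by fun_prop
  have hpi := Real.pi_pos
  have key := comparison
    (d := fun x s => m / π * (e s * heatBump p r x s) - (u₂ x (t₁ + s) - u₁ x (t₁ + s)))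
    (dt := fun x s => m / π * (-L * e s * heatBump p r x s + e s * heatBumpT p r x s)
      - (ut₂ x (t₁ + s) - ut₁ x (t₁ + s)))
    (dx := fun x s => m / π * (e s * heatBumpX p r x s) - (ux₂ x (t₁ + s) - ux₁ x (t₁ + s)))
    (dxx := fun x s => m / π * (e s * heatBumpT p r x s) - (uxx₂ x (t₁ + s) - uxx₁ x (t₁ + s)))
    (a₁ := p - r) (a₂ := p + r) (M := m) (L := L) (t₀ := t₂ - t₁) hL0
    (fun x s hs => ((((he s).mul (heatBump_hasDerivAt_time p r x hs)).const_mul _).sub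
      (((dt₂ x _ (hshift hs)).comp_const_add t₁ s).sub
        ((dt₁ x _ (hshift hs)).comp_const_add t₁ s))))
    (fun x s hs => (((heatBump_hasDerivAt_space p r x s).const_mul _).const_mul _).sub
      ((dx₂ x _ (hshift hs)).sub (dx₁ x _ (hshift hs))))
    (fun x s hs => (((heatBumpX_hasDerivAt_space p r x hs).const_mul _).const_mul _).sub
      ((dxx₂ x _ (hshift hs)).sub (dxx₁ x _ (hshift hs))))
    ((continuousOn_const.mul
      ((hec.comp continuous_snd).continuousOn.mul (heatBump_continuousOn p r))).sub
      (hcshift.mono fun z hz => ⟨trivial, Set.Ioi_subset_Ici_self hz.2⟩))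
    (fun x s hs _ => ?_)
    (fun x s hs hs2 hpos => ?_)
    (fun R ρ ε hρ hε => ?_)
  · have := key x (t₂ - t₁) (sub_pos.2 ht) le_rfl
    simp only [e, add_sub_cancel] at this
    have e2 : Real.exp (-L * (t₂ - t₁)) * heatBump p r x (t₂ - t₁) / π * m =
      m / π * (Real.exp (-L * (t₂ - t₁)) * heatBump p r x (t₂ - t₁)) := by ring
    linarith
  all_goals
    have hbar : ∀ x s, 0 < s → m / π * (e s * heatBump p r x s) ≤ m / π * heatBump p r x s := by
      intro x s hs
      have h1 : e s ≤ 1 := Real.exp_le_one_iff.2 (by nlinarith)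
      have h2 := heatBump_pos p x hr hs
      exact mul_le_mul_of_nonneg_left (by nlinarith) (by positivity)
    have hbar2 : ∀ x s, 0 < s → m / π * (e s * heatBump p r x s) ≤ m := by
      intro x s hs
      refine (hbar x s hs).trans ?_
      have := mul_le_mul_of_nonneg_left (heatBump_le_pi p x hr hs) (by positivity : 0 ≤ m / π)
      rwa [div_mul_cancel₀ _ hpi.ne'] at this
  · have := hbar2 x s hs
    have := hle x _ (hshift hs)
    linarith
  · have hw := hle x _ (hshift hs)
    have h3 := (abs_le.1 (hL (t₁ + s) _ _ (hshift hs) (by linarith) (hC₂ x _ (hshift hs))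
      (hC₁ x _ (hshift hs)))).1
    rw [abs_of_nonneg (sub_nonneg.2 hw)] at h3
    rw [e₁ x _ (hshift hs), e₂ x _ (hshift hs)]
    have hLd := mul_nonneg hL0 hpos.le
    have : m / π * (-L * e s * heatBump p r x s) = -L * (m / π * (e s * heatBump p r x s)) := by
      ring
    linarith
  · -- Near `t₁` the separation persists on `[p - r, p + r]` by compactness; off it the bump decays.
    have huc := (isCompact_Icc.prod isCompact_Icc).uniformContinuousOn_of_continuous
      (hcshift.mono (t := Set.Icc (p - r) (p + r) ×ˢ Set.Icc 0 1) fun z hz => ⟨trivial, hz.2.1⟩)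
    obtain ⟨δ₁, hδ₁, huc⟩ := Metric.uniformContinuousOn_iff.1 huc ε hε
    set δ₂ := (ε * ρ * π / (4 * m)) ^ 2 with hδ₂
    refine ⟨min (min δ₁ 1) δ₂, by positivity, fun s hs hsd x _ hx1 hx2 => ?_⟩
    have hs1 : s < δ₁ := hsd.trans_le ((min_le_left _ _).trans (min_le_left _ _))
    have hs2 : s < 1 := hsd.trans_le ((min_le_left _ _).trans (min_le_right _ _))
    have hs3 : s < δ₂ := hsd.trans_le (min_le_right _ _)
    rcases le_or_gt |x - p| r with hx | hx
    · have hxI : x ∈ Set.Icc (p - r) (p + r) := by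
        obtain ⟨h1, h2⟩ := abs_le.1 hx
        exact ⟨by linarith, by linarith⟩
      have h4 := huc (x, s) ⟨hxI, hs.le, hs2.le⟩ (x, 0) ⟨hxI, le_rfl, zero_le_one⟩
        (by simpa [Prod.dist_eq, Real.dist_eq, abs_of_pos hs] using ⟨hδ₁, hs1⟩)
      simp only [Real.dist_eq, add_zero] at h4
      have := (abs_lt.1 h4).1
      have := hsep x hx
      have := hbar2 x s hs
      linarith
    · have hfar : r + ρ ≤ |x - p| := by
        rcases lt_abs.1 hx with h | h
        · rw [abs_of_pos (by linarith)] at hx2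
          exact le_abs.2 (Or.inl (by linarith))
        · rw [abs_of_neg (by linarith)] at hx1
          exact le_abs.2 (Or.inr (by linarith))
      have h1 := heatBump_le_sqrt hr hs hρ hfar
      have h2 : √s < ε * ρ * π / (4 * m) := (Real.sqrt_lt' (by positivity)).2 hs3
      have h3 : m / π * (2 * √s / ρ) < ε := by
        rw [lt_div_iff₀ (by positivity)] at h2
        rw [div_mul_div_comm, div_lt_iff₀ (by positivity)]
        nlinarith [mul_pos (mul_pos hε hρ) hpi]
      have h4 := mul_le_mul_of_nonneg_left h1 (by positivity : 0 ≤ m / π)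
      have := hbar x s hs
      have := hle x _ (hshift hs)
      linarith

/-! ### Solutions with Heaviside initial data -/

lemma IsHeavisideSolBdd.initialDatum {f u : ℝ → ℝ → ℝ} {α a : ℝ} (h : IsHeavisideSolBdd f α a u)
    (R : ℝ) {ρ ε : ℝ} (hρ : 0 < ρ) (hε : 0 < ε) :
    ∃ δ > 0, ∀ t, 0 < t → t < δ → ∀ x, |x| ≤ R → ρ ≤ |x - a| →
      |u x t - α * (if 0 ≤ a - x then 1 else 0)| < ε := by
  have hK : IsCompact (Set.Icc (-R) R ∩ {x | ρ ≤ |x - a|}) :=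
    isCompact_Icc.inter_right (isClosed_le continuous_const (by fun_prop))
  obtain ⟨δ, hδ, h⟩ := h.2.2 _ hK (fun hc => by
    have := hc.2
    simp only [sub_self, abs_zero, Set.mem_ofPred_eq] at this
    linarith) ε hε
  exact ⟨δ, hδ, fun t h1 h2 x hx hxa => h t ⟨h1, h2⟩ x ⟨abs_le.1 hx, hxa⟩⟩

lemma IsHeavisideSolBdd.translate {f u : ℝ → ℝ → ℝ} {α a : ℝ} (h : IsHeavisideSolBdd f α a u)
    (x₀ : ℝ) : IsHeavisideSolBdd f α (a - x₀) (fun x t => u (x + x₀) t) := by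
  obtain ⟨⟨ut, ux, uxx, h1, h2, h3, c1, c2, c3, e⟩, ⟨C, hC⟩, hi⟩ := h
  have hcs : ∀ {g : ℝ → ℝ → ℝ},
      ContinuousOn (fun z : ℝ × ℝ => g z.1 z.2) (Set.univ ×ˢ Set.Ioi 0) →
      ContinuousOn (fun z : ℝ × ℝ => g (z.1 + x₀) z.2) (Set.univ ×ˢ Set.Ioi 0) := fun hg =>
    hg.comp (f := fun z : ℝ × ℝ => (z.1 + x₀, z.2)) (by fun_prop) fun z hz => ⟨trivial, hz.2⟩
  refine ⟨⟨fun x t => ut (x + x₀) t, fun x t => ux (x + x₀) t, fun x t => uxx (x + x₀) t,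
    fun x t ht => h1 _ t ht, fun x t ht => (h2 _ t ht).comp_add_const x x₀,
    fun x t ht => (h3 _ t ht).comp_add_const x x₀, hcs c1, hcs c2, hcs c3,
    fun x t ht => e _ t ht⟩, ⟨C, fun x t ht => hC _ t ht⟩, ?_⟩
  intro K hK haK ε hε
  obtain ⟨δ, hδ, h⟩ := hi ((fun x => x + x₀) '' K) (hK.image (by fun_prop)) (by
    rintro ⟨x, hx, rfl⟩
    exact haK (by simpa using hx)) ε hε
  refine ⟨δ, hδ, fun t ht x hx => ?_⟩
  have := h t ht (x + x₀) ⟨x, hx, rfl⟩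
  rwa [show a - (x + x₀) = a - x₀ - x by ring] at this

lemma isSolOn_ode {f : ℝ → ℝ → ℝ} (hf : ContDiff ℝ 2 (Function.uncurry f)) {ω : ℝ → ℝ}
    (h : ∀ t, HasDerivAt ω (f t (ω t)) t) : IsSolOn f (fun _ t => ω t) (Set.Ioi 0) := by
  have hω : Continuous ω := continuous_iff_continuousAt.2 fun t => (h t).continuousAt
  have hc : Continuous fun t => f t (ω t) := hf.continuous.comp (by fun_prop : Continuous
    fun t => (t, ω t))
  exact ⟨fun _ t => f t (ω t), fun _ _ => 0, fun _ _ => 0, fun _ t _ => h t,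
    fun x t _ => hasDerivAt_const x _, fun x t _ => hasDerivAt_const x _,
    (hc.comp continuous_snd).continuousOn, continuousOn_const, continuousOn_const,
    fun _ t _ => by simp⟩

lemma IsHeavisideSolBdd.bound {f u : ℝ → ℝ → ℝ} {α a : ℝ} (h : IsHeavisideSolBdd f α a u) :
    ∃ C, 0 ≤ C ∧ ∀ x t, 0 < t → |u x t| ≤ C := by
  obtain ⟨C, hC⟩ := h.2.1
  exact ⟨C, (abs_nonneg _).trans (hC 0 1 one_pos), fun x t ht => hC x t ht⟩

lemma heaviside_le {f u₁ u₂ : ℝ → ℝ → ℝ} (hf : ContDiff ℝ 2 (Function.uncurry f))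
    {α a₁ a₂ : ℝ} (hα : 0 < α) (ha : a₁ < a₂) (h₁ : IsHeavisideSolBdd f α a₁ u₁)
    (h₂ : IsHeavisideSolBdd f α a₂ u₂) : ∀ x t, 0 < t → u₁ x t ≤ u₂ x t := by
  intro x t ht
  obtain ⟨C₁, -, hC₁⟩ := h₁.bound
  obtain ⟨C₂, -, hC₂⟩ := h₂.bound
  obtain ⟨L, hL⟩ := sol_compare (t₀ := t) (C := max C₁ C₂) (K := 0) (σ := 1) (a₁ := a₁) (a₂ := a₂)
    hf h₁.1 h₂.1
    (fun x t ht _ => (hC₁ x t ht).trans (le_max_left _ _))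
    (fun x t ht _ => (hC₂ x t ht).trans (le_max_right _ _)) 0 le_rfl (by norm_num)
    (fun R ρ ε hρ hε => by
      obtain ⟨δ₁, hδ₁, i₁⟩ := h₁.initialDatum R hρ (half_pos hε)
      obtain ⟨δ₂, hδ₂, i₂⟩ := h₂.initialDatum R hρ (half_pos hε)
      refine ⟨min δ₁ δ₂, lt_min hδ₁ hδ₂, fun t h1 h2 x hx hx1 hx2 => ?_⟩
      have j₁ := (abs_lt.1 (i₁ t h1 (h2.trans_le (min_le_left _ _)) x hx hx1)).2
      have j₂ := (abs_lt.1 (i₂ t h1 (h2.trans_le (min_le_right _ _)) x hx hx2)).1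
      split_ifs at j₁ j₂ <;> linarith)
  have := hL x t ht le_rfl
  linarith

/-- Strict monotonicity in the jump position. -/
lemma heaviside_lt {f u₁ u₂ : ℝ → ℝ → ℝ} (hf : ContDiff ℝ 2 (Function.uncurry f))
    {α a₁ a₂ : ℝ} (hα : 0 < α) (ha : a₁ < a₂) (h₁ : IsHeavisideSolBdd f α a₁ u₁)
    (h₂ : IsHeavisideSolBdd f α a₂ u₂) : ∀ x t, 0 < t → u₁ x t < u₂ x t := by
  intro x t ht
  obtain ⟨C₁, -, hC₁⟩ := h₁.bound
  obtain ⟨C₂, -, hC₂⟩ := h₂.bound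
  -- On the middle half of `[a₁, a₂]` the difference `u₂ - u₁` tends to `α`.
  set r := (a₂ - a₁) / 4 with hr
  set p := (a₁ + a₂) / 2 with hp
  have hrpos : 0 < r := by rw [hr]; linarith
  obtain ⟨δ₁, hδ₁, i₁⟩ := h₁.initialDatum (|p| + r) hrpos (by positivity : 0 < α / 4)
  obtain ⟨δ₂, hδ₂, i₂⟩ := h₂.initialDatum (|p| + r) hrpos (by positivity : 0 < α / 4)
  set t₁ := min (min (δ₁ / 2) (δ₂ / 2)) (t / 2) with ht₁
  have ht₁pos : 0 < t₁ := by positivity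
  have k1 : t₁ < δ₁ := ((min_le_left _ _).trans (min_le_left _ _)).trans_lt (by linarith)
  have k2 : t₁ < δ₂ := ((min_le_left _ _).trans (min_le_right _ _)).trans_lt (by linarith)
  have k3 : t₁ < t := (min_le_right _ _).trans_lt (by linarith)
  obtain ⟨κ, hκ, hsep⟩ := exists_separation hf (max C₁ C₂) p x hrpos ht₁pos k3
  have := hsep u₁ u₂ h₁.1 h₂.1 (fun x t ht => (hC₁ x t ht).trans (le_max_left _ _))
    (fun x t ht => (hC₂ x t ht).trans (le_max_right _ _)) (heaviside_le hf hα ha h₁ h₂)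
    (α / 2) (by positivity) (fun y hy => by
      obtain ⟨y1, y2⟩ := abs_le.1 hy
      have hyR : |y| ≤ |p| + r := by
        have := abs_add_le p (y - p)
        rw [add_sub_cancel] at this
        linarith
      have j₁ := (abs_lt.1 (i₁ t₁ ht₁pos k1 y hyR (le_abs.2 (Or.inl (by linarith))))).2
      have j₂ := (abs_lt.1 (i₂ t₁ ht₁pos k2 y hyR (le_abs.2 (Or.inr (by linarith))))).1
      rw [if_neg (by linarith)] at j₁
      rw [if_pos (by linarith)] at j₂
      linarith)
  have : 0 < κ * (α / 2) := by positivity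
  linarith

/-- Strict spatial monotonicity. No differentiability of `∂ₓu` in time is available, so instead of
the linearised equation the difference quotients `(u (x + η) t - u x t) / η` are used: they are
bounded away from `0`, uniformly in `η`, by `exists_separation`. -/
lemma heaviside_deriv_neg {f u : ℝ → ℝ → ℝ} (hf : ContDiff ℝ 2 (Function.uncurry f))
    {α a : ℝ} (hα : 0 < α) (h : IsHeavisideSolBdd f α a u) (x t : ℝ) (ht : 0 < t) :
    deriv (fun y => u y t) x < 0 := by
  have hlt : ∀ η > 0, ∀ x t, 0 < t → u (x + η) t < u x t := fun η hη =>
    heaviside_lt hf hα (by linarith) (h.translate η) h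
  obtain ⟨C, -, hC⟩ := h.bound
  obtain ⟨ut, ux, uxx, -, dx, -, -, cx, -, -⟩ := h.1
  have ht2 : 0 < t / 2 := by positivity
  -- The mean value theorem gives a point of negative slope at time `t / 2`.
  obtain ⟨p, hp⟩ : ∃ p, ux p (t / 2) < 0 := by
    obtain ⟨p, -, hp⟩ := exists_hasDerivAt_eq_slope (fun y => u y (t / 2))
      (fun y => ux y (t / 2)) (zero_lt_one' ℝ)
      (fun y _ => (dx y _ ht2).continuousAt.continuousWithinAt) (fun y _ => dx y _ ht2)
    refine ⟨p, ?_⟩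
    have := hlt 1 one_pos 0 (t / 2) ht2
    rw [zero_add] at this
    rw [hp]
    simpa using this
  have hcp : Continuous fun y => ux y (t / 2) := by
    rw [← continuousOn_univ]
    exact cx.comp (f := fun y : ℝ => (y, t / 2)) (by fun_prop) fun y _ => ⟨trivial, ht2⟩
  set k := -ux p (t / 2) / 2 with hk
  have hkpos : 0 < k := by rw [hk]; linarith
  obtain ⟨r, hr, hball⟩ := Metric.eventually_nhds_iff.1
    (hcp.continuousAt.eventually_lt (continuousAt_const (y := -k)) (by linarith : ux p (t / 2) < -k))
  obtain ⟨κ, hκ, hsep⟩ := exists_separation hf C p x (half_pos hr) ht2 (half_lt_self ht)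
  have hslope : ∀ η, 0 < η → η < r / 2 → (u (x + η) t - u x t) / η ≤ -(κ * k) := by
    intro η hη hηr
    have hs := hsep (fun x t => u (x + η) t) u (h.translate η).1 h.1 (fun x t ht => hC _ t ht) hC
      (fun x t ht => (hlt η hη x t ht).le) (k * η) (by positivity) (fun y hy => by
        obtain ⟨c, hc, hcs⟩ := exists_hasDerivAt_eq_slope (fun y => u y (t / 2))
          (fun y => ux y (t / 2)) (lt_add_of_pos_right y hη)
          (fun y _ => (dx y _ ht2).continuousAt.continuousWithinAt) (fun y _ => dx y _ ht2)
        have hcb : ux c (t / 2) < -k := hball (by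
          rw [Real.dist_eq]
          obtain ⟨y1, y2⟩ := abs_le.1 hy
          exact abs_lt.2 ⟨by linarith [hc.1], by linarith [hc.2]⟩)
        rw [hcs, add_sub_cancel_left, div_lt_iff₀ hη] at hcb
        linarith)
    rw [div_le_iff₀ hη]
    linarith
  have hd := (dx x t ht)
  rw [hd.deriv]
  have hlim := hd.tendsto_slope_zero_right
  have hle : ux x t ≤ -(κ * k) := by
    refine le_of_tendsto hlim ?_
    filter_upwards [Ioo_mem_nhdsGT (half_pos hr)] with η hη
    have := hslope η hη.1 hη.2
    rwa [div_eq_inv_mul] at this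
  have : 0 < κ * k := by positivity
  linarith

/-- **Lemma 3.1** (basic properties of the Heaviside-type solution): confinement between `0`
and `ω(α,·)`, strict spatial monotonicity, limits at `x = ±∞`, translation equivariance, and
strict monotonicity in the parameter `a`. -/
theorem heaviside_solution_properties
    (f : ℝ → ℝ → ℝ) (T α : ℝ) (ωsol : ℝ → ℝ → ℝ)
    (hT : 0 < T)
    (hf : ContDiff ℝ 2 (Function.uncurry f))
    (hfper : ∀ t u : ℝ, f (t + T) u = f t u)
    (hf0 : ∀ t : ℝ, f t 0 = 0)
    (hωinit : ∀ β : ℝ, ωsol β 0 = β)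
    (hωode : ∀ β t : ℝ, HasDerivAt (ωsol β) (f t (ωsol β t)) t)
    (hα : 0 < α) (hαfix : ωsol α T = α)
    (hαper : ∀ t : ℝ, ωsol α (t + T) = ωsol α t)
    (hαpos : ∀ t : ℝ, 0 < ωsol α t) :
    ∀ a : ℝ, ∀ u : ℝ → ℝ → ℝ, IsHeavisideSolBdd f α a u →
      (∀ x t : ℝ, 0 < t → 0 ≤ u x t ∧ u x t ≤ ωsol α t) ∧
      (∀ x t : ℝ, 0 < t → deriv (fun y => u y t) x < 0) ∧
      (∀ t : ℝ, 0 < t → Tendsto (fun x => u x t) atTop (𝓝 0) ∧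
        Tendsto (fun x => u x t) atBot (𝓝 (ωsol α t))) ∧
      (∀ x₀ : ℝ, IsHeavisideSolBdd f α (a - x₀) (fun x t => u (x + x₀) t)) ∧
      (∀ a₁ a₂ : ℝ, ∀ u₁ u₂ : ℝ → ℝ → ℝ, a₁ < a₂ →
        IsHeavisideSolBdd f α a₁ u₁ → IsHeavisideSolBdd f α a₂ u₂ →
        ∀ x t : ℝ, 0 < t → u₁ x t < u₂ x t) := by
  intro a u hu
  have hsol0 : IsSolOn f (fun _ _ => 0) (Set.Ioi 0) :=
    isSolOn_ode hf (ω := fun _ => 0) fun t => by rw [hf0]; exact hasDerivAt_const t 0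
  have hsolω := isSolOn_ode hf (hωode α)
  have hωc : Continuous (ωsol α) :=
    continuous_iff_continuousAt.2 fun t => (hωode α t).continuousAt
  obtain ⟨C, hC0, hC⟩ := hu.bound
  have hωbd : ∀ t₀ : ℝ, ∃ D, ∀ t, 0 < t → t ≤ t₀ → |ωsol α t| ≤ D := fun t₀ => by
    obtain ⟨D, hD⟩ := (isCompact_Icc (a := 0) (b := t₀)).exists_bound_of_continuousOn
      hωc.continuousOn
    exact ⟨D, fun t h1 h2 => hD t ⟨h1.le, h2⟩⟩
  have hω0 : ∀ ε > 0, ∃ δ > 0, ∀ t, 0 < t → t < δ → |ωsol α t - α| < ε := fun ε hε => by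
    obtain ⟨δ, hδ, h⟩ := Metric.continuousAt_iff.1 (hωc.continuousAt (x := 0)) ε hε
    refine ⟨δ, hδ, fun t h1 h2 => ?_⟩
    have := h (x := t) (by simpa [abs_of_pos h1] using h2)
    rwa [hωinit, Real.dist_eq] at this
  have hlow : ∀ x t : ℝ, 0 < t → 0 ≤ u x t := by
    intro x t ht
    obtain ⟨L, hL⟩ := sol_compare (t₀ := t) (C := C) (K := 0) (σ := 1) (a₁ := a) (a₂ := a)
      hf hsol0 hu.1 (fun x t _ _ => by simpa using hC0) (fun x t ht _ => hC x t ht) 0 le_rfl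
      (by norm_num)
      (fun R ρ ε hρ hε => by
        obtain ⟨δ, hδ, i⟩ := hu.initialDatum R hρ hε
        refine ⟨δ, hδ, fun t h1 h2 x hx hx1 _ => ?_⟩
        have j := (abs_lt.1 (i t h1 h2 x hx hx1)).1
        split_ifs at j <;> linarith)
    have := hL x t ht le_rfl
    linarith
  have hup : ∀ x t : ℝ, 0 < t → u x t ≤ ωsol α t := by
    intro x t ht
    obtain ⟨D, hD⟩ := hωbd t
    obtain ⟨L, hL⟩ := sol_compare (t₀ := t) (C := max C D) (K := 0) (σ := 1) (a₁ := a) (a₂ := a)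
      hf hu.1 hsolω (fun x t ht _ => (hC x t ht).trans (le_max_left _ _))
      (fun x t h1 h2 => (hD t h1 h2).trans (le_max_right _ _)) 0 le_rfl (by norm_num)
      (fun R ρ ε hρ hε => by
        obtain ⟨δ, hδ, i⟩ := hu.initialDatum R hρ (half_pos hε)
        obtain ⟨δ', hδ', i'⟩ := hω0 _ (half_pos hε)
        refine ⟨min δ δ', lt_min hδ hδ', fun t h1 h2 x hx hx1 _ => ?_⟩
        have j := (abs_lt.1 (i t h1 (h2.trans_le (min_le_left _ _)) x hx hx1)).2
        have j' := (abs_lt.1 (i' t h1 (h2.trans_le (min_le_right _ _)))).1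
        split_ifs at j <;> linarith)
    have := hL x t ht le_rfl
    linarith
  refine ⟨fun x t ht => ⟨hlow x t ht, hup x t ht⟩, heaviside_deriv_neg hf hα hu,
    fun t ht => ⟨?_, ?_⟩, hu.translate, fun a₁ a₂ u₁ u₂ ha h₁ h₂ => heaviside_lt hf hα ha h₁ h₂⟩
  · -- `0 ≤ u ≤ α exp (L t + t - (x - a))`
    obtain ⟨L, hL⟩ := sol_compare (t₀ := t) (C := C) (K := α) (σ := -1) (a₁ := a) (a₂ := a)
      hf hu.1 hsol0 (fun x t ht _ => hC x t ht) (fun x t _ _ => by simpa using hC0) a hα.le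
      (by norm_num)
      (fun R ρ ε hρ hε => by
        obtain ⟨δ, hδ, i⟩ := hu.initialDatum R hρ hε
        refine ⟨δ, hδ, fun t h1 h2 x hx hx1 _ => ?_⟩
        have j := (abs_lt.1 (i t h1 h2 x hx hx1)).2
        split_ifs at j with hxa
        · have h1 : 1 ≤ Real.exp (-1 * (x - a)) := Real.one_le_exp (by linarith)
          have := mul_le_mul_of_nonneg_left h1 hα.le
          linarith
        · have : 0 < α * Real.exp (-1 * (x - a)) := by positivity
          linarith)
    have hlim : Tendsto (fun x => α * Real.exp (L * t + t + -1 * (x - a))) atTop (𝓝 0) := by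
      rw [← mul_zero α]
      refine (Real.tendsto_exp_atBot.comp (tendsto_atBot_add_const_left _ _ ?_)).const_mul α
      exact (tendsto_atTop_add_const_right _ (-a) tendsto_id).const_mul_atTop_of_neg (by norm_num)
    refine tendsto_of_tendsto_of_tendsto_of_le_of_le tendsto_const_nhds hlim
      (fun x => hlow x t ht) fun x => ?_
    simpa using hL x t ht le_rfl
  · -- `0 ≤ ω - u ≤ α exp (L t + t + (x - a))`
    obtain ⟨D, hD⟩ := hωbd t
    obtain ⟨L, hL⟩ := sol_compare (t₀ := t) (C := max C D) (K := α) (σ := 1) (a₁ := a) (a₂ := a)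
      hf hsolω hu.1 (fun x t h1 h2 => (hD t h1 h2).trans (le_max_right _ _))
      (fun x t ht _ => (hC x t ht).trans (le_max_left _ _)) a hα.le (by norm_num)
      (fun R ρ ε hρ hε => by
        obtain ⟨δ, hδ, i⟩ := hu.initialDatum R hρ (half_pos hε)
        obtain ⟨δ', hδ', i'⟩ := hω0 _ (half_pos hε)
        refine ⟨min δ δ', lt_min hδ hδ', fun t h1 h2 x hx hx1 _ => ?_⟩
        have j := (abs_lt.1 (i t h1 (h2.trans_le (min_le_left _ _)) x hx hx1)).1
        have j' := (abs_lt.1 (i' t h1 (h2.trans_le (min_le_right _ _)))).2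
        split_ifs at j with hxa
        · have : 0 < α * Real.exp (1 * (x - a)) := by positivity
          linarith
        · have h1 : 1 ≤ Real.exp (1 * (x - a)) := Real.one_le_exp (by linarith)
          have := mul_le_mul_of_nonneg_left h1 hα.le
          linarith)
    have hlim : Tendsto (fun x => ωsol α t - α * Real.exp (L * t + t + 1 * (x - a))) atBot
        (𝓝 (ωsol α t)) := by
      have h0 : Tendsto (fun x => α * Real.exp (L * t + t + 1 * (x - a))) atBot (𝓝 (α * 0)) := by
        refine (Real.tendsto_exp_atBot.comp (tendsto_atBot_add_const_left _ _ ?_)).const_mul α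
        exact (tendsto_atBot_add_const_right _ (-a) tendsto_id).const_mul_atBot one_pos
      simpa using h0.const_sub (ωsol α t)
    refine tendsto_of_tendsto_of_tendsto_of_le_of_le hlim tendsto_const_nhds (fun x => ?_)
      (fun x => hup x t ht)
    have := hL x t ht le_rfl
    simp only at this ⊢
    linarith

end
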